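/- Let C be a maximal cap in AG(3,3) and let c be any point of AG(3,3) not in C. Then there are exactly 2 unordered pairs {x, y} of distinct points of C with x + y + c = 0; that is, every point outside a maximal cap completes exactly two lines with pairs of points of the cap. -/

import Mathlib

/-- A cap in `AG(n,3)`: a finite set of points of `Fin n → ZMod 3` containing no
three distinct collinear points (three distinct points are collinear iff they sum to zero). -/
def IsCap {n : ℕ} (C : Finset (Fin n → ZMod 3)) : Prop :=
  ∀ x ∈ C, ∀ y ∈ C, ∀ z ∈ C, x ≠ y → x ≠ z → y ≠ z → x + y + z ≠ 0

/-- A maximal cap: a cap of largest possible size. -/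
def MaximalCap {n : ℕ} (C : Finset (Fin n → ZMod 3)) : Prop :=
  IsCap C ∧ ∀ D : Finset (Fin n → ZMod 3), IsCap D → D.card ≤ C.card

/-!
Call a pair of points of `C` collinear with a point `c ∉ C` a secant of `C` through `c`. If three
secants pass through `c`, then their directions form a basis, so in suitable affine coordinates
`c = 0` and `C` contains the six points `± eᵢ`. Any further point of `C` has no zero coordinate, and
two further points have different products of coordinates, so `|C| ≤ 8`.

Since the paraboloid `z = x² + y²` is a cap with nine points, a maximal cap `C` thus has at most two
secants through each of the `27 - |C| ≤ 18` points outside it. Every pair of points of `C` is a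
secant through exactly one of these points, and there are at least `36` pairs, so equality holds
throughout.
-/

open Finset

lemma eq_one_or_eq_neg_one_of_ne_zero {a : ZMod 3} (ha : a ≠ 0) : a = 1 ∨ a = -1 := by
  decide +revert

section Module

variable {V : Type*} [AddCommGroup V] [Module (ZMod 3) V] [DecidableEq V]

lemma add_smul_mem_pair {a : ZMod 3} (ha : a ≠ 0) (c v : V) :
    c + a • v ∈ ({c + v, c - v} : Finset V) := by
  obtain rfl | rfl := eq_one_or_eq_neg_one_of_ne_zero ha <;> simp [sub_eq_add_neg]

lemma linearIndependent_pair_of_pair_ne {c v w : V} (hv : v ≠ 0) (hw : w ≠ 0)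
    (hvw : ({c + v, c - v} : Finset V) ≠ {c + w, c - w}) :
    LinearIndependent (ZMod 3) ![v, w] := by
  refine (LinearIndependent.pair_iff' hv).2 fun a h => ?_
  obtain rfl | ha := eq_or_ne a 0
  · exact hw (by rw [← h, zero_smul])
  · obtain rfl | rfl := eq_one_or_eq_neg_one_of_ne_zero ha <;> subst h <;> apply hvw
    · rw [one_smul]
    · rw [neg_one_smul, sub_neg_eq_add, ← sub_eq_add_neg, pair_comm]

end Module

section Secants

variable {n : ℕ} {C : Finset (Fin n → ZMod 3)} {c : Fin n → ZMod 3}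

/-- The secants of `C` through `c`, a secant being encoded as the pair of points of `C` on it. -/
def secants (C : Finset (Fin n → ZMod 3)) (c : Fin n → ZMod 3) :
    Finset (Finset (Fin n → ZMod 3)) :=
  {s ∈ C.powersetCard 2 | ∑ x ∈ s, x + c = 0}

lemma subset_of_mem_secants {s : Finset (Fin n → ZMod 3)} (hs : s ∈ secants C c) : s ⊆ C :=
  (mem_powersetCard.1 (mem_filter.1 hs).1).1

lemma exists_direction_of_mem_secants {s : Finset (Fin n → ZMod 3)} (hs : s ∈ secants C c) :
    ∃ v ≠ 0, s = {c + v, c - v} := by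
  obtain ⟨hsC, hsum⟩ := mem_filter.1 hs
  obtain ⟨x, y, hxy, rfl⟩ := card_eq_two.1 (mem_powersetCard.1 hsC).2
  rw [sum_pair hxy] at hsum
  have hy : y = c - (x - c) := by
    linear_combination hsum - ZModModule.char_nsmul_eq_zero 3 c
  refine ⟨x - c, fun hx => hxy ?_, ?_⟩
  · rw [hy, hx, sub_zero, sub_eq_zero.1 hx]
  · rw [← hy, add_sub_cancel]

end Secants

namespace IsCap

variable {m n : ℕ}

lemma map_affineEquiv {C : Finset (Fin m → ZMod 3)} (hC : IsCap C)
    (e : (Fin m → ZMod 3) ≃ᵃ[ZMod 3] (Fin n → ZMod 3)) :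
    IsCap (C.map e.toEquiv.toEmbedding) := by
  have map_sum (x y z : Fin m → ZMod 3) : e x + e y + e z = e.linear (x + y + z) := by
    have map_eq (x : Fin m → ZMod 3) : e x = e.linear x + e 0 := by
      simpa using e.map_vadd 0 x
    rw [map_eq x, map_eq y, map_eq z, map_add, map_add]
    linear_combination ZModModule.char_nsmul_eq_zero 3 (e 0)
  simp only [IsCap, forall_mem_map, Equiv.coe_toEmbedding, AffineEquiv.coe_toEquiv]
  intro x hx y hy z hz hxy hxz hyz hsum
  rw [map_sum, LinearEquiv.map_eq_zero_iff] at hsum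
  exact hC x hx y hy z hz (ne_of_apply_ne e hxy) (ne_of_apply_ne e hxz) (ne_of_apply_ne e hyz) hsum

variable {C : Finset (Fin n → ZMod 3)}

lemma sum_card_secants (hC : IsCap C) : ∑ c ∈ Cᶜ, #(secants C c) = (#C).choose 2 := by
  have third_notMem : ∀ s ∈ C.powersetCard 2, -∑ x ∈ s, x ∈ Cᶜ := by
    intro s hs
    obtain ⟨hsC, hs2⟩ := mem_powersetCard.1 hs
    obtain ⟨x, y, hxy, rfl⟩ := card_eq_two.1 hs2
    rw [sum_pair hxy, mem_compl]
    intro hz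
    refine hC x (hsC (by simp)) y (hsC (by simp)) _ hz hxy (fun h => hxy ?_) (fun h => hxy ?_)
      (add_neg_cancel _)
    · linear_combination ZModModule.char_nsmul_eq_zero 3 x - h
    · linear_combination h - ZModModule.char_nsmul_eq_zero 3 y
  rw [← card_powersetCard, card_eq_sum_card_fiberwise third_notMem]
  simp only [secants, neg_eq_iff_add_eq_zero]

lemma linearIndependent_of_pairwise (hC : IsCap C) {c : Fin n → ZMod 3}
    {v : Fin 3 → Fin n → ZMod 3} (hmem : ∀ i, ∀ a : ZMod 3, a ≠ 0 → c + a • v i ∈ C)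
    (hv : Pairwise fun i j => LinearIndependent (ZMod 3) ![v i, v j]) :
    LinearIndependent (ZMod 3) v := by
  have pair {i j} (hij : i ≠ j) := LinearIndependent.pair_iff.1 (hv hij)
  refine Fintype.linearIndependent_iff.2 fun g hg => ?_
  rw [Fin.sum_univ_three] at hg
  -- A relation without a zero coefficient would make three of the points collinear.
  have exists_zero : ∃ i, g i = 0 := by
    by_contra! hne
    have distinct {i j} (hij : i ≠ j) : c + g i • v i ≠ c + g j • v j := fun h =>
      hne i (pair hij (g i) (-g j) (by rw [add_left_cancel h]; module)).1
    refine hC _ (hmem 0 _ (hne 0)) _ (hmem 1 _ (hne 1)) _ (hmem 2 _ (hne 2))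
      (distinct (by decide)) (distinct (by decide)) (distinct (by decide)) ?_
    linear_combination hg + ZModModule.char_nsmul_eq_zero 3 c
  obtain ⟨i, hi⟩ := exists_zero
  match i, hi with
  | 0, hi =>
    have h := pair (i := 1) (j := 2) (by decide) (g 1) (g 2) (by simpa [hi] using hg)
    exact Fin.forall_fin_succ.2 ⟨hi, Fin.forall_fin_two.2 h⟩
  | 1, hi =>
    have h := pair (i := 0) (j := 2) (by decide) (g 0) (g 2) (by simpa [hi] using hg)
    exact Fin.forall_fin_succ.2 ⟨h.1, Fin.forall_fin_two.2 ⟨hi, h.2⟩⟩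
  | 2, hi =>
    have h := pair (i := 0) (j := 1) (by decide) (g 0) (g 1) (by simpa [hi] using hg)
    exact Fin.forall_fin_succ.2 ⟨h.1, Fin.forall_fin_two.2 ⟨h.2, hi⟩⟩

lemma zero_notMem_of_single_mem (hC : IsCap C) (i : Fin n)
    (hsingle : ∀ a : ZMod 3, a ≠ 0 → Pi.single i a ∈ C) : 0 ∉ C := by
  intro h0
  refine hC 0 h0 _ (hsingle 1 (by decide)) _ (hsingle (-1) (by decide)) ?_ ?_ ?_ ?_
  · simp [eq_comm]
  · simp [eq_comm]
  · exact (Pi.single_injective i).ne (by decide)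
  · simp [← Pi.single_add]

lemma single_add_single_notMem (hC : IsCap C)
    (hsingle : ∀ i, ∀ a : ZMod 3, a ≠ 0 → Pi.single i a ∈ C) {i j : Fin n} (hij : i ≠ j)
    {a b : ZMod 3} (ha : a ≠ 0) (hb : b ≠ 0) : Pi.single i a + Pi.single j b ∉ C := by
  intro hab
  refine hC _ hab _ (hsingle i (-a) (neg_ne_zero.2 ha)) _ (hsingle j (-b) (neg_ne_zero.2 hb))
    (fun h => ?_) (fun h => ?_) (fun h => ?_) ?_
  · simpa [hij, hb] using congrFun h j
  · simpa [hij, ha] using congrFun h i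
  · simpa [hij, ha] using congrFun h i
  · simp only [Pi.single_neg]; abel

end IsCap

/-- Since the products agree, `x` and `y` differ by a sign in exactly two coordinates; `i` is the
third one. -/
lemma exists_add_add_single_eq_zero {x y : Fin 3 → ZMod 3} (hx : ∀ i, x i ≠ 0) (hy : ∀ i, y i ≠ 0)
    (hprod : ∏ i, x i = ∏ i, y i) (hxy : x ≠ y) : ∃ i, x + y + Pi.single i (x i) = 0 := by
  have eq_or_neg (i : Fin 3) : y i = x i ∨ y i = -x i := by
    obtain h | h := eq_one_or_eq_neg_one_of_ne_zero (hx i) <;>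
      obtain h' | h' := eq_one_or_eq_neg_one_of_ne_zero (hy i) <;> simp [h, h']
  have prod_ne_neg : x 0 * x 1 * x 2 ≠ -(x 0 * x 1 * x 2) := by
    have h : x 0 * x 1 * x 2 ≠ 0 := mul_ne_zero (mul_ne_zero (hx 0) (hx 1)) (hx 2)
    obtain h | h := eq_one_or_eq_neg_one_of_ne_zero h <;> rw [h] <;> decide
  have add_self (i : Fin 3) : x i + x i + x i = 0 := by
    linear_combination ZModModule.char_nsmul_eq_zero 3 (x i)
  rw [Fin.prod_univ_three, Fin.prod_univ_three] at hprod
  obtain h₀ | h₀ := eq_or_neg 0 <;> obtain h₁ | h₁ := eq_or_neg 1 <;>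
    obtain h₂ | h₂ := eq_or_neg 2 <;> rw [h₀, h₁, h₂] at hprod
  · exact (hxy (by ext i; fin_cases i <;> simp [*])).elim
  · exact (prod_ne_neg (by linear_combination hprod)).elim
  · exact (prod_ne_neg (by linear_combination hprod)).elim
  · exact ⟨0, by ext i; fin_cases i <;> simp [*]⟩
  · exact (prod_ne_neg (by linear_combination hprod)).elim
  · exact ⟨1, by ext i; fin_cases i <;> simp [*]⟩
  · exact ⟨2, by ext i; fin_cases i <;> simp [*]⟩
  · exact (prod_ne_neg (by linear_combination hprod)).elim

namespace IsCap

variable {C : Finset (Fin 3 → ZMod 3)}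

lemma exists_eq_single_of_apply_eq_zero (hC : IsCap C)
    (hsingle : ∀ i, ∀ a : ZMod 3, a ≠ 0 → Pi.single i a ∈ C) {x : Fin 3 → ZMod 3} (hx : x ∈ C)
    {k : Fin 3} (hk : x k = 0) : ∃ i, ∃ a, x = Pi.single i a := by
  have hx_eq : x = Pi.single (k + 1) (x (k + 1)) + Pi.single (k + 2) (x (k + 2)) := by
    ext i
    fin_cases k <;> fin_cases i <;> simp_all
  obtain h₁ | h₁ := eq_or_ne (x (k + 1)) 0
  · exact ⟨k + 2, x (k + 2), by simpa [h₁] using hx_eq⟩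
  obtain h₂ | h₂ := eq_or_ne (x (k + 2)) 0
  · exact ⟨k + 1, x (k + 1), by simpa [h₂] using hx_eq⟩
  rw [hx_eq] at hx
  exact (hC.single_add_single_notMem hsingle (by simp) h₁ h₂ hx).elim

lemma card_filter_exists_apply_eq_zero_le_six (hC : IsCap C)
    (hsingle : ∀ i, ∀ a : ZMod 3, a ≠ 0 → Pi.single i a ∈ C) :
    #{x ∈ C | ∃ i, x i = 0} ≤ 6 := by
  have subset_image : {x ∈ C | ∃ i, x i = 0} ⊆
      image₂ (fun i a => Pi.single i a) univ ({1, -1} : Finset (ZMod 3)) := by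
    intro x hx
    obtain ⟨hxC, k, hk⟩ := mem_filter.1 hx
    obtain ⟨i, a, rfl⟩ := hC.exists_eq_single_of_apply_eq_zero hsingle hxC hk
    have ha : a ≠ 0 := by
      rintro rfl
      exact hC.zero_notMem_of_single_mem i (hsingle i) (by simpa using hxC)
    exact mem_image₂_of_mem (mem_univ i) (by simpa using eq_one_or_eq_neg_one_of_ne_zero ha)
  exact (card_le_card subset_image).trans (card_image₂_le _ _ _)

lemma card_filter_forall_apply_ne_zero_le_two (hC : IsCap C)
    (hsingle : ∀ i, ∀ a : ZMod 3, a ≠ 0 → Pi.single i a ∈ C) :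
    #{x ∈ C | ∀ i, x i ≠ 0} ≤ 2 := by
  refine card_le_card_of_injOn (t := {1, -1}) (fun x : Fin 3 → ZMod 3 => ∏ i, x i) (fun x hx => ?_)
    fun x hx y hy hprod => ?_
  · have hne : ∏ i, x i ≠ 0 := prod_ne_zero_iff.2 fun i _ => (mem_filter.1 hx).2 i
    simpa using eq_one_or_eq_neg_one_of_ne_zero hne
  · obtain ⟨hxC, hx0⟩ := mem_filter.1 hx
    obtain ⟨hyC, hy0⟩ := mem_filter.1 hy
    by_contra hxy
    obtain ⟨i, hi⟩ := exists_add_add_single_eq_zero hx0 hy0 hprod hxy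
    have ne_single {z : Fin 3 → ZMod 3} (hz : ∀ i, z i ≠ 0) (a : ZMod 3) : z ≠ Pi.single i a := by
      rintro rfl
      exact hz (i + 1) (by simp)
    exact hC x hxC y hyC _ (hsingle i _ (hx0 i)) hxy (ne_single hx0 _) (ne_single hy0 _) hi

lemma card_le_eight_of_single_mem (hC : IsCap C)
    (hsingle : ∀ i, ∀ a : ZMod 3, a ≠ 0 → Pi.single i a ∈ C) : #C ≤ 8 := by
  have h := card_filter_add_card_filter_not (s := C) (fun x => ∃ i, x i = 0)
  push Not at h
  rw [← h]
  exact add_le_add (hC.card_filter_exists_apply_eq_zero_le_six hsingle)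
    (hC.card_filter_forall_apply_ne_zero_le_two hsingle)

lemma card_le_eight_of_linearIndependent (hC : IsCap C) {c : Fin 3 → ZMod 3}
    {v : Fin 3 → Fin 3 → ZMod 3} (hv : LinearIndependent (ZMod 3) v)
    (hmem : ∀ i, ∀ a : ZMod 3, a ≠ 0 → c + a • v i ∈ C) : #C ≤ 8 := by
  let b := basisOfLinearIndependentOfCardEqFinrank hv (by simp)
  let e := b.equivFun.symm.toAffineEquiv.trans (AffineEquiv.constVAdd (ZMod 3) _ c)
  have e_single (i : Fin 3) (a : ZMod 3) : e (Pi.single i a) = c + a • v i := by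
    simp [e, b]
  rw [← card_map e.symm.toEquiv.toEmbedding]
  refine (hC.map_affineEquiv e.symm).card_le_eight_of_single_mem fun i a ha => ?_
  exact mem_map.2 ⟨_, hmem i a ha, by simp [← e_single]⟩

lemma card_secants_le_two (hC : IsCap C) (hcard : 8 < #C) (c : Fin 3 → ZMod 3) :
    #(secants C c) ≤ 2 := by
  by_contra! hlt
  obtain ⟨s⟩ : Nonempty (Fin 3 ↪ secants C c) :=
    Function.Embedding.nonempty_of_card_le (by simpa [Nat.succ_le_iff] using hlt)
  choose v hv0 hv using fun i => exists_direction_of_mem_secants (s i).2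
  have hmem (i : Fin 3) (a : ZMod 3) (ha : a ≠ 0) : c + a • v i ∈ C :=
    subset_of_mem_secants (s i).2 (hv i ▸ add_smul_mem_pair ha c (v i))
  have hpair : Pairwise fun i j => LinearIndependent (ZMod 3) ![v i, v j] := fun i j hij =>
    linearIndependent_pair_of_pair_ne (hv0 i) (hv0 j) (c := c) <| by
      rw [← hv i, ← hv j]
      exact Subtype.coe_injective.ne (s.injective.ne hij)
  exact hcard.not_ge
    (hC.card_le_eight_of_linearIndependent (hC.linearIndependent_of_pairwise hmem hpair) hmem)

end IsCap

/-- The elliptic paraboloid `z = x² + y²` of `AG(3,3)`, which witnesses that a maximal cap has at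
least nine points. -/
def paraboloid : Finset (Fin 3 → ZMod 3) :=
  univ.map ⟨fun p : ZMod 3 × ZMod 3 => ![p.1, p.2, p.1 ^ 2 + p.2 ^ 2],
    fun _ _ h => Prod.ext (congrFun h 0) (congrFun h 1)⟩

lemma card_paraboloid : #paraboloid = 9 := by
  simp [paraboloid, ZMod.card]

lemma eq_zero_of_sq_add_sq_eq_zero {a b : ZMod 3} (h : a ^ 2 + b ^ 2 = 0) : a = 0 ∧ b = 0 := by
  decide +revert

lemma isCap_paraboloid : IsCap paraboloid := by
  simp only [IsCap, paraboloid, forall_mem_map, mem_univ, forall_const]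
  rintro ⟨a, b⟩ ⟨a', b'⟩ ⟨a'', b''⟩ hne - - hsum
  have h₀ : a + a' + a'' = 0 := congrFun hsum 0
  have h₁ : b + b' + b'' = 0 := congrFun hsum 1
  have h₂ : a ^ 2 + b ^ 2 + (a' ^ 2 + b' ^ 2) + (a'' ^ 2 + b'' ^ 2) = 0 := congrFun hsum 2
  have three_eq_zero : (3 : ZMod 3) = 0 := rfl
  have hsq : (a - a') ^ 2 + (b - b') ^ 2 = 0 := by
    linear_combination 2 * h₂ + 2 * (a + a' - a'') * h₀ + 2 * (b + b' - b'') * h₁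
      - ((a + a') ^ 2 + (b + b') ^ 2) * three_eq_zero
  obtain ⟨ha, hb⟩ := eq_zero_of_sq_add_sq_eq_zero hsq
  exact hne (by rw [sub_eq_zero.1 ha, sub_eq_zero.1 hb])

lemma MaximalCap.nine_le_card {C : Finset (Fin 3 → ZMod 3)} (hC : MaximalCap C) : 9 ≤ #C :=
  card_paraboloid ▸ hC.2 paraboloid isCap_paraboloid

/-- Every point `c` outside a maximal cap `C` in `AG(3,3)` completes exactly two lines
with pairs of points of the cap: there are exactly 2 two-element subsets `{x, y}` of `C`
with `x + y + c = 0`. -/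
theorem point_outside_maximal_cap_AG33_completes_two_lines
    (C : Finset (Fin 3 → ZMod 3)) (hC : MaximalCap C)
    (c : Fin 3 → ZMod 3) (hc : c ∉ C) :
    ((C.powersetCard 2).filter (fun p => (∑ x ∈ p, x) + c = 0)).card = 2 := by
  change #(secants C c) = 2
  have hcard : 9 ≤ #C := hC.nine_le_card
  have hle : ∀ e ∈ Cᶜ, #(secants C e) ≤ 2 := fun e _ => hC.1.card_secants_le_two hcard e
  have hcompl : #Cᶜ + #C = 27 := by
    rw [card_compl_add_card]
    simp
  have hsum : ∑ e ∈ Cᶜ, #(secants C e) = ∑ e ∈ Cᶜ, 2 := by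
    refine (sum_le_sum hle).antisymm ?_
    calc ∑ e ∈ Cᶜ, 2 = #Cᶜ * 2 := by rw [sum_const, smul_eq_mul]
      _ ≤ 36 := by omega
      _ = Nat.choose 9 2 := rfl
      _ ≤ (#C).choose 2 := Nat.choose_le_choose 2 hcard
      _ = ∑ e ∈ Cᶜ, #(secants C e) := hC.1.sum_card_secants.symm
  exact (sum_eq_sum_iff_of_le hle).1 hsum c (mem_compl.2 hc)
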